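/- arXiv:1703.10412 — 7 statements merged into one kernel-verified Lean document; each statement's English description precedes it below -/
import Mathlib

section
/- Let (X, ◁) be a dynamical set over Λ and let σ = {σ(λ) : X × X → X × X}, written σ(λ)(x, y) = (x ⇀_λ y, x ↼_λ y), satisfy the invariance condition (λ ◁ (x ⇀_λ y)) ◁ (x ↼_λ y) = (λ ◁ x) ◁ y for all λ, x, y. Define σ̃ : Q(X) ×_Λ Q(X) → Q(X) ×_Λ Q(X) by σ̃((λ, x), (λ ◁ x, y)) = ((λ, x ⇀_λ y), (λ ◁ (x ⇀_λ y), x ↼_λ y)); this is a well-defined quiver morphism, and σ satisfies the set-theoretical dynamical Yang–Baxter equation if and only if σ̃ satisfies the braid relation (σ̃ ×_Λ id) ∘ (id ×_Λ σ̃) ∘ (σ̃ ×_Λ id) = (id ×_Λ σ̃) ∘ (σ̃ ×_Λ id) ∘ (id ×_Λ σ̃) on Q(X) ×_Λ Q(X) ×_Λ Q(X). -/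
/-- `σ(λ)₁₂` on `X × X × X`, where `σ(λ)(x,y) = (l λ x y, r λ x y)`. -/
def dybS12 {Λ X : Type*} (l r : Λ → X → X → X) (lam : Λ) :
    X × X × X → X × X × X :=
  fun t => (l lam t.1 t.2.1, r lam t.1 t.2.1, t.2.2)

/-- `σ(λ ◁ X⁽¹⁾)₂₃` on `X × X × X`. -/
def dybS23 {Λ X : Type*} (act : Λ → X → Λ) (l r : Λ → X → X → X) (lam : Λ) :
    X × X × X → X × X × X :=
  fun t => (t.1, l (act lam t.1) t.2.1 t.2.2, r (act lam t.1) t.2.1 t.2.2)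

/-- The fiber product `Q(X) ×_Λ Q(X)` of the quiver associated to the
dynamical set `(X, act)` with itself. -/
def QA2 {Λ X : Type*} (act : Λ → X → Λ) : Type _ :=
  {p : (Λ × X) × (Λ × X) // act p.1.1 p.1.2 = p.2.1}

/-- The triple fiber product `Q(X) ×_Λ Q(X) ×_Λ Q(X)`. -/
def QA3 {Λ X : Type*} (act : Λ → X → Λ) : Type _ :=
  {t : (Λ × X) × (Λ × X) × (Λ × X) //
    act t.1.1 t.1.2 = t.2.1.1 ∧ act t.2.1.1 t.2.1.2 = t.2.2.1}

/-- The induced map `σ̃ : Q(X) ×_Λ Q(X) → Q(X) ×_Λ Q(X)`,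
`σ̃((λ,x),(λ◁x,y)) = ((λ, x⇀_λ y), (λ◁(x⇀_λ y), x↼_λ y))`. -/
def sigTilde {Λ X : Type*} (act : Λ → X → Λ) (l r : Λ → X → X → X) :
    QA2 act → QA2 act :=
  fun p =>
    ⟨((p.val.1.1, l p.val.1.1 p.val.1.2 p.val.2.2),
      (act p.val.1.1 (l p.val.1.1 p.val.1.2 p.val.2.2),
        r p.val.1.1 p.val.1.2 p.val.2.2)), rfl⟩

/-- `σ̃ ×_Λ id` on the triple fiber product (needs the invariance condition). -/
def sigTilde12 {Λ X : Type*} (act : Λ → X → Λ) (l r : Λ → X → X → X)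
    (hinv : ∀ lam x y, act (act lam (l lam x y)) (r lam x y) = act (act lam x) y) :
    QA3 act → QA3 act :=
  fun t =>
    ⟨((t.val.1.1, l t.val.1.1 t.val.1.2 t.val.2.1.2),
      (act t.val.1.1 (l t.val.1.1 t.val.1.2 t.val.2.1.2),
        r t.val.1.1 t.val.1.2 t.val.2.1.2),
      t.val.2.2),
      ⟨rfl, by rw [hinv, t.prop.1]; exact t.prop.2⟩⟩

/-- `id ×_Λ σ̃` on the triple fiber product. -/
def sigTilde23 {Λ X : Type*} (act : Λ → X → Λ) (l r : Λ → X → X → X) :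
    QA3 act → QA3 act :=
  fun t =>
    ⟨(t.val.1,
      (t.val.2.1.1, l t.val.2.1.1 t.val.2.1.2 t.val.2.2.2),
      (act t.val.2.1.1 (l t.val.2.1.1 t.val.2.1.2 t.val.2.2.2),
        r t.val.2.1.1 t.val.2.1.2 t.val.2.2.2)),
      ⟨t.prop.1, rfl⟩⟩

/-!
A length-three path in `Q(X)` is determined by its initial vertex `λ` and its three labels, so
`Q(X) ×_Λ Q(X) ×_Λ Q(X)` is the disjoint union over `λ` of copies of `X × X × X`. On the copy at
`λ` the maps `σ̃ ×_Λ id` and `id ×_Λ σ̃` act as `σ(λ)₁₂` and `σ(λ ◁ ·)₂₃`; invariance is what keeps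
the last vertex of the path in place under `σ̃ ×_Λ id`. Hence the braid relation is the dynamical
Yang–Baxter equation on all copies at once.
-/

theorem forall_eq_iff_eq_of_semiconj {ι α β : Type*} {φ : ι → α → β} {f g : ι → α → α}
    {F G : β → β} (hinj : ∀ i, Function.Injective (φ i)) (hsurj : ∀ b, ∃ i a, φ i a = b)
    (hf : ∀ i, Function.Semiconj (φ i) (f i) F) (hg : ∀ i, Function.Semiconj (φ i) (g i) G) :
    (∀ i, f i = g i) ↔ F = G := by
  constructor
  · intro hfg
    funext b
    obtain ⟨i, a, rfl⟩ := hsurj b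
    rw [← (hf i).eq, ← (hg i).eq, hfg i]
  · rintro rfl i
    funext a
    exact hinj i (((hf i).eq a).trans ((hg i).eq a).symm)

section DynamicalSet

variable {Λ X : Type*} (act : Λ → X → Λ) (l r : Λ → X → X → X)

theorem tgt_sigTilde
    (hinv : ∀ lam x y, act (act lam (l lam x y)) (r lam x y) = act (act lam x) y)
    (p : QA2 act) :
    act (sigTilde act l r p).val.2.1 (sigTilde act l r p).val.2.2 = act p.val.2.1 p.val.2.2 := by
  rw [← p.prop]
  exact hinv _ _ _

namespace QA3

/-- The path of length three in the quiver `Q(X)` with initial vertex `lam` and successive labels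
`t`, as an element of the triple fiber product. The vertex is a separate argument so that
`path act lam` parametrizes the paths starting at `lam`. -/
def path (lam : Λ) (t : X × X × X) : QA3 act :=
  ⟨((lam, t.1), (act lam t.1, t.2.1), (act (act lam t.1) t.2.1, t.2.2)), rfl, rfl⟩

theorem path_injective (lam : Λ) : Function.Injective (path act lam) := fun _ _ h =>
  congrArg (fun q : QA3 act => (q.val.1.2, q.val.2.1.2, q.val.2.2.2)) h

theorem exists_path_eq (q : QA3 act) : ∃ lam t, path act lam t = q := by
  obtain ⟨⟨⟨lam, x⟩, ⟨mu, y⟩, ⟨nu, z⟩⟩, hmu, hnu⟩ := q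
  obtain rfl : act lam x = mu := hmu
  obtain rfl : act (act lam x) y = nu := hnu
  exact ⟨lam, (x, y, z), rfl⟩

theorem semiconj_path_sigTilde12
    (hinv : ∀ lam x y, act (act lam (l lam x y)) (r lam x y) = act (act lam x) y) (lam : Λ) :
    Function.Semiconj (path act lam) (dybS12 l r lam) (sigTilde12 act l r hinv) := fun t =>
  Subtype.ext <| by simp only [path, sigTilde12, dybS12, hinv]

theorem semiconj_path_sigTilde23 (lam : Λ) :
    Function.Semiconj (path act lam) (dybS23 act l r lam) (sigTilde23 act l r) := fun _ => rfl

end QA3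

end DynamicalSet

/-- Let `σ(λ)(x,y) = (l λ x y, r λ x y)` satisfy the invariance condition. Then
`σ̃` is a quiver morphism (it preserves `src` and `tgt`), and `σ` satisfies the
set-theoretical dynamical Yang–Baxter equation if and only if `σ̃` satisfies the
braid relation on `Q(X) ×_Λ Q(X) ×_Λ Q(X)`. -/
theorem sigTilde_quiverMor_and_DYBE_iff_braid {Λ X : Type*} [Nonempty Λ]
    (act : Λ → X → Λ) (l r : Λ → X → X → X)
    (hinv : ∀ lam x y,
      act (act lam (l lam x y)) (r lam x y) = act (act lam x) y) :
    (∀ p : QA2 act,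
      (sigTilde act l r p).val.1.1 = p.val.1.1 ∧
      act (sigTilde act l r p).val.2.1 (sigTilde act l r p).val.2.2
        = act p.val.2.1 p.val.2.2) ∧
    ((∀ lam : Λ,
        dybS12 l r lam ∘ dybS23 act l r lam ∘ dybS12 l r lam
          = dybS23 act l r lam ∘ dybS12 l r lam ∘ dybS23 act l r lam)
      ↔ (sigTilde12 act l r hinv ∘ sigTilde23 act l r ∘ sigTilde12 act l r hinv
          = sigTilde23 act l r ∘ sigTilde12 act l r hinv ∘ sigTilde23 act l r)) := by
  refine ⟨fun p => ⟨rfl, tgt_sigTilde act l r hinv p⟩, ?_⟩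
  have h12 := QA3.semiconj_path_sigTilde12 act l r hinv
  have h23 := QA3.semiconj_path_sigTilde23 act l r
  exact forall_eq_iff_eq_of_semiconj (QA3.path_injective act) (QA3.exists_path_eq act)
    (fun lam => (h12 lam).comp_right ((h23 lam).comp_right (h12 lam)))
    (fun lam => (h23 lam).comp_right ((h12 lam).comp_right (h23 lam)))
end

section
/- A dynamical set X over Λ is of PH type if and only if X is isomorphic to K_Λ in the category of dynamical sets over Λ, where K_Λ is the dynamical set with underlying set Λ and λ ◁ k = k; moreover, in that case the unique morphism ψ_X : X → K_Λ, ψ_X(λ)(x) = λ ◁_X x, is itself an isomorphism. -/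
/-!
A morphism into the dynamical set `K` with `l ◁ k = k` can only be the structure map itself, so `X`
is isomorphic to `K` exactly when its structure map is an isomorphism. A morphism is an isomorphism
as soon as each of its components is bijective, because the inverses of the components again form a
morphism. Finally `(l, x) ↦ (l, l ◁ x)` preserves the first coordinate, so it is bijective if and
only if every `x ↦ l ◁ x` is.
-/

open Function

section FiberwiseMap

variable {ι α β : Type*} {f : ι → α → β}

theorem injective_fst_prodMk_iff :
    Injective (fun p : ι × α => (p.1, f p.1 p.2)) ↔ ∀ i, Injective (f i) := by
  constructor
  · intro h i a b hab
    exact Prod.mk_right_injective i (h (Prod.ext rfl hab))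
  · rintro h ⟨i, a⟩ ⟨j, b⟩ hab
    obtain ⟨rfl, hf⟩ := Prod.mk.inj hab
    exact congrArg (Prod.mk i) (h i hf)

theorem surjective_fst_prodMk_iff :
    Surjective (fun p : ι × α => (p.1, f p.1 p.2)) ↔ ∀ i, Surjective (f i) := by
  constructor
  · intro h i b
    obtain ⟨⟨j, a⟩, ha⟩ := h (i, b)
    obtain ⟨rfl, hf⟩ := Prod.mk.inj ha
    exact ⟨a, hf⟩
  · rintro h ⟨i, b⟩
    obtain ⟨a, rfl⟩ := h i b
    exact ⟨(i, a), rfl⟩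

theorem bijective_fst_prodMk_iff :
    Bijective (fun p : ι × α => (p.1, f p.1 p.2)) ↔ ∀ i, Bijective (f i) := by
  simp only [Bijective, injective_fst_prodMk_iff, surjective_fst_prodMk_iff, forall_and]

end FiberwiseMap

section DynamicalSet

variable {Λ X Y K : Type*}

/-- The dynamical set is of PH type. Here and below a dynamical set is given by its curried
structure map `act l x = l ◁ x`, which may take values in any type `K`; the case `K = Λ` is that of
dynamical sets over `Λ`. -/
def IsPHType (act : Λ → X → K) : Prop :=
  Bijective fun p : Λ × X => (p.1, act p.1 p.2)

/-- The structure map `l ◁ k = k` on `K`, which makes `K` a terminal object among the dynamical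
sets with values in `K`. -/
def terminalAct (Λ K : Type*) : Λ → K → K :=
  fun _ k => k

/-- The family `f` is a morphism of dynamical sets from `(X, actX)` to `(Y, actY)`. -/
def IsDynamicalHom (actX : Λ → X → K) (actY : Λ → Y → K) (f : Λ → X → Y) : Prop :=
  ∀ l x, actY l (f l x) = actX l x

/-- The families `f` and `g` are mutually inverse isomorphisms of dynamical sets between
`(X, actX)` and `(Y, actY)`. -/
def IsDynamicalIso (actX : Λ → X → K) (actY : Λ → Y → K) (f : Λ → X → Y) (g : Λ → Y → X) : Prop :=
  IsDynamicalHom actX actY f ∧ IsDynamicalHom actY actX g ∧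
    (∀ l, LeftInverse (g l) (f l)) ∧ ∀ l, RightInverse (g l) (f l)

theorem isDynamicalHom_terminalAct_iff {act f : Λ → X → K} :
    IsDynamicalHom act (terminalAct Λ K) f ↔ f = act := by
  simp only [IsDynamicalHom, terminalAct, funext_iff]

theorem IsDynamicalHom.of_rightInverse {actX : Λ → X → K} {actY : Λ → Y → K} {f : Λ → X → Y}
    {g : Λ → Y → X} (hf : IsDynamicalHom actX actY f) (hfg : ∀ l, RightInverse (g l) (f l)) :
    IsDynamicalHom actY actX g := fun l y =>
  calc
    actX l (g l y) = actY l (f l (g l y)) := (hf l (g l y)).symm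
    _ = actY l y := congrArg (actY l) (hfg l y)

theorem IsDynamicalHom.exists_isDynamicalIso_iff {actX : Λ → X → K} {actY : Λ → Y → K}
    {f : Λ → X → Y} (hf : IsDynamicalHom actX actY f) :
    (∃ g, IsDynamicalIso actX actY f g) ↔ ∀ l, Bijective (f l) := by
  constructor
  · rintro ⟨g, -, -, hgf, hfg⟩ l
    exact ⟨(hgf l).injective, (hfg l).surjective⟩
  · intro h
    choose g hgf hfg using fun l => bijective_iff_has_inverse.mp (h l)
    exact ⟨g, hf, hf.of_rightInverse hfg, hgf, hfg⟩

theorem isPHType_iff_exists_isDynamicalIso_act {act : Λ → X → K} :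
    IsPHType act ↔ ∃ g, IsDynamicalIso act (terminalAct Λ K) act g :=
  bijective_fst_prodMk_iff.trans
    (isDynamicalHom_terminalAct_iff.mpr rfl).exists_isDynamicalIso_iff.symm

theorem PH_iff_iso_terminal_general (act : Λ → X → K) :
    (IsPHType act ↔ ∃ f g, IsDynamicalIso act (terminalAct Λ K) f g) ∧
      (IsPHType act → ∃ g, IsDynamicalIso act (terminalAct Λ K) act g) := by
  refine ⟨⟨fun h => ⟨act, isPHType_iff_exists_isDynamicalIso_act.mp h⟩, ?_⟩,
    isPHType_iff_exists_isDynamicalIso_act.mp⟩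
  rintro ⟨f, g, hfg⟩
  obtain rfl : f = act := isDynamicalHom_terminalAct_iff.mp hfg.1
  exact isPHType_iff_exists_isDynamicalIso_act.mpr ⟨g, hfg⟩

end DynamicalSet

/-- A dynamical set `(X, act)` over `Λ` is of PH type (i.e. the map
`(λ, x) ↦ (λ, λ ◁ x)` is bijective) if and only if `X` is isomorphic to the
dynamical set `K_Λ` (underlying set `Λ`, structure map `λ ◁ k = k`); moreover,
in that case the unique morphism `ψ_X : X → K_Λ`, `ψ_X(λ)(x) = λ ◁ x`, is
itself an isomorphism. -/
theorem PH_iff_iso_terminal {Λ X : Type*} [Nonempty Λ] (act : Λ → X → Λ) :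
    ((Function.Bijective fun p : Λ × X => (p.1, act p.1 p.2)) ↔
      ∃ (f : Λ → X → Λ) (g : Λ → Λ → X),
        (∀ l x, f l x = act l x) ∧      -- `f` is a morphism `X → K_Λ`
        (∀ l k, act l (g l k) = k) ∧    -- `g` is a morphism `K_Λ → X`
        (∀ l x, g l (f l x) = x) ∧
        (∀ l k, f l (g l k) = k)) ∧
    ((Function.Bijective fun p : Λ × X => (p.1, act p.1 p.2)) →
      ∃ g : Λ → Λ → X,
        (∀ l k, act l (g l k) = k) ∧    -- `g` is a morphism, inverse to `ψ_X`
        (∀ l x, g l (act l x) = x) ∧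
        (∀ l k, act l (g l k) = k)) :=
  have ⟨h_iff, h_act⟩ := PH_iff_iso_terminal_general act
  ⟨h_iff, fun h => (h_act h).imp fun _ hg => hg.2⟩
end

section
/- Let X be a dynamical set over Λ of PH type and let T = ⟨-,-,-⟩ be a ternary operation on Λ. Define σ_T(λ)(x, y) = (λ \ ⟨λ, λ ◁ x, (λ ◁ x) ◁ y⟩, ⟨λ, λ ◁ x, (λ ◁ x) ◁ y⟩ \ ((λ ◁ x) ◁ y)). Then σ_T is a dynamical Yang–Baxter map on X if and only if T satisfies, for all a, b, c, d ∈ Λ, the equations (E1): ⟨a, ⟨a, b, c⟩, ⟨⟨a, b, c⟩, c, d⟩⟩ = ⟨a, b, ⟨b, c, d⟩⟩ and (E2): ⟨⟨a, b, c⟩, c, d⟩ = ⟨⟨a, b, ⟨b, c, d⟩⟩, ⟨b, c, d⟩, d⟩. -/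
/-- `σ(λ)(x,y) = (l λ x y, r λ x y)` is a dynamical Yang–Baxter map on
`(X, act)`: the invariance condition together with the set-theoretical
dynamical Yang–Baxter equation. -/
def IsDYBMap {Λ X : Type*} (act : Λ → X → Λ) (l r : Λ → X → X → X) : Prop :=
  (∀ lam x y, act (act lam (l lam x y)) (r lam x y) = act (act lam x) y) ∧
  (∀ lam : Λ,
    dybS12 l r lam ∘ dybS23 act l r lam ∘ dybS12 l r lam
      = dybS23 act l r lam ∘ dybS12 l r lam ∘ dybS23 act l r lam)

/-- Equation (E1) for a ternary operation `T` on `Λ`. -/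
def TernE1 {Λ : Type*} (T : Λ → Λ → Λ → Λ) : Prop :=
  ∀ a b c d, T a (T a b c) (T (T a b c) c d) = T a b (T b c d)

/-- Equation (E2) for a ternary operation `T` on `Λ`. -/
def TernE2 {Λ : Type*} (T : Λ → Λ → Λ → Λ) : Prop :=
  ∀ a b c d, T (T a b c) c d = T (T a b (T b c d)) (T b c d) d

/-- The left component `x ⇀_λ y = λ \ ⟨λ, λ◁x, (λ◁x)◁y⟩` of `σ_T`. -/
def sigmaTL {Λ X : Type*} (act : Λ → X → Λ) (dv : Λ → Λ → X)
    (T : Λ → Λ → Λ → Λ) : Λ → X → X → X :=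
  fun lam x y => dv lam (T lam (act lam x) (act (act lam x) y))

/-- The right component `x ↼_λ y = ⟨λ, λ◁x, (λ◁x)◁y⟩ \ ((λ◁x)◁y)` of `σ_T`. -/
def sigmaTR {Λ X : Type*} (act : Λ → X → Λ) (dv : Λ → Λ → X)
    (T : Λ → Λ → Λ → Λ) : Λ → X → X → X :=
  fun lam x y => dv (T lam (act lam x) (act (act lam x) y)) (act (act lam x) y)

/-! Record a triple `(x, y, z)` based at `λ` by the vertices `b = λ ◁ x`, `c = b ◁ y`, `d = c ◁ z`
of the path it traces from `λ`. In these coordinates `σ_T(λ)₁₂` replaces `b` by `⟨λ, b, c⟩` and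
`σ_T(λ ◁ ·)₂₃` replaces `c` by `⟨b, c, d⟩`, each fixing the other vertices. The dynamical
Yang–Baxter equation thus becomes the braid relation for these two moves: its two sides always
place `b` at the same vertex exactly when (E1) holds, and `c` exactly when (E2) holds. -/

section Paths

variable {Λ X : Type*}

/-- The vertices after `lam` of the path traced from `lam` by three successive elements of `X`. -/
def pathVertices (act : Λ → X → Λ) (lam : Λ) : X × X × X → Λ × Λ × Λ :=
  fun t => (act lam t.1, act (act lam t.1) t.2.1, act (act (act lam t.1) t.2.1) t.2.2)

/-- The path from `lam` through three prescribed vertices, with the steps chosen by the division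
`dv`. -/
def pathEdges (dv : Λ → Λ → X) (lam : Λ) : Λ × Λ × Λ → X × X × X :=
  fun v => (dv lam v.1, dv v.1 v.2.1, dv v.2.1 v.2.2)

/-- The move `b ↦ ⟨a, b, c⟩` on paths `(a, b, c, d)` with fixed origin `a`: this is `σ_T(a)₁₂` in
vertex coordinates. -/
def ternFlip12 (T : Λ → Λ → Λ → Λ) (a : Λ) : Λ × Λ × Λ → Λ × Λ × Λ :=
  fun v => (T a v.1 v.2.1, v.2.1, v.2.2)

/-- The move `c ↦ ⟨b, c, d⟩` on paths `(a, b, c, d)` with fixed origin `a`: this is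
`σ_T(a ◁ ·)₂₃` in vertex coordinates. -/
def ternFlip23 (T : Λ → Λ → Λ → Λ) : Λ × Λ × Λ → Λ × Λ × Λ :=
  fun v => (v.1, T v.1 v.2.1 v.2.2, v.2.2)

/-- `σ_T(λ)₁₂` on `X × X × X`. -/
abbrev sigmaT12 (act : Λ → X → Λ) (dv : Λ → Λ → X) (T : Λ → Λ → Λ → Λ) (lam : Λ) :
    X × X × X → X × X × X :=
  dybS12 (sigmaTL act dv T) (sigmaTR act dv T) lam

/-- `σ_T(λ ◁ ·)₂₃` on `X × X × X`. -/
abbrev sigmaT23 (act : Λ → X → Λ) (dv : Λ → Λ → X) (T : Λ → Λ → Λ → Λ) (lam : Λ) :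
    X × X × X → X × X × X :=
  dybS23 act (sigmaTL act dv T) (sigmaTR act dv T) lam

theorem ternFlip_braid_iff (T : Λ → Λ → Λ → Λ) :
    (∀ a, ternFlip12 T a ∘ ternFlip23 T ∘ ternFlip12 T a
        = ternFlip23 T ∘ ternFlip12 T a ∘ ternFlip23 T) ↔ TernE1 T ∧ TernE2 T := by
  simp only [TernE1, TernE2, funext_iff, Prod.forall, Function.comp_apply, ternFlip12, ternFlip23,
    Prod.mk.injEq, and_true, forall_and]

variable {act : Λ → X → Λ} {dv : Λ → Λ → X}

theorem leftInverse_pathVertices_pathEdges (hdv : ∀ l m, act l (dv l m) = m) (lam : Λ) :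
    Function.LeftInverse (pathVertices act lam) (pathEdges dv lam) :=
  fun v => by simp only [pathVertices, pathEdges, hdv]

theorem sigmaT_invariance (hdv : ∀ l m, act l (dv l m) = m) (T : Λ → Λ → Λ → Λ) (lam : Λ)
    (x y : X) :
    act (act lam (sigmaTL act dv T lam x y)) (sigmaTR act dv T lam x y) = act (act lam x) y := by
  simp only [sigmaTL, sigmaTR, hdv]

theorem semiconj_pathVertices_sigmaT12 (hdv : ∀ l m, act l (dv l m) = m) (T : Λ → Λ → Λ → Λ)
    (lam : Λ) :
    Function.Semiconj (pathVertices act lam) (sigmaT12 act dv T lam) (ternFlip12 T lam) :=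
  fun t => by simp only [pathVertices, dybS12, ternFlip12, sigmaTL, sigmaTR, hdv]

theorem semiconj_pathVertices_sigmaT23 (hdv : ∀ l m, act l (dv l m) = m) (T : Λ → Λ → Λ → Λ)
    (lam : Λ) :
    Function.Semiconj (pathVertices act lam) (sigmaT23 act dv T lam) (ternFlip23 T) :=
  fun t => by simp only [pathVertices, dybS23, ternFlip23, sigmaTL, sigmaTR, hdv]

-- Once both `σ_T(λ)₁₂` and `σ_T(λ ◁ ·)₂₃` have acted, all three steps are values of `dv`, so they
-- can be recovered from the vertices even when `λ ◁ ·` is not injective.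
theorem pathEdges_pathVertices_sigmaT12_sigmaT23 (hdv : ∀ l m, act l (dv l m) = m)
    (T : Λ → Λ → Λ → Λ) (lam : Λ) (t : X × X × X) :
    pathEdges dv lam (pathVertices act lam (sigmaT12 act dv T lam (sigmaT23 act dv T lam t)))
      = sigmaT12 act dv T lam (sigmaT23 act dv T lam t) := by
  simp only [pathEdges, pathVertices, dybS12, dybS23, sigmaTL, sigmaTR, hdv]

theorem pathEdges_pathVertices_sigmaT23_sigmaT12 (hdv : ∀ l m, act l (dv l m) = m)
    (T : Λ → Λ → Λ → Λ) (lam : Λ) (t : X × X × X) :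
    pathEdges dv lam (pathVertices act lam (sigmaT23 act dv T lam (sigmaT12 act dv T lam t)))
      = sigmaT23 act dv T lam (sigmaT12 act dv T lam t) := by
  simp only [pathEdges, pathVertices, dybS12, dybS23, sigmaTL, sigmaTR, hdv]

theorem sigmaT_braid_iff_ternFlip_braid (hdv : ∀ l m, act l (dv l m) = m)
    (T : Λ → Λ → Λ → Λ) (lam : Λ) :
    sigmaT12 act dv T lam ∘ sigmaT23 act dv T lam ∘ sigmaT12 act dv T lam
        = sigmaT23 act dv T lam ∘ sigmaT12 act dv T lam ∘ sigmaT23 act dv T lam ↔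
      ternFlip12 T lam ∘ ternFlip23 T ∘ ternFlip12 T lam
        = ternFlip23 T ∘ ternFlip12 T lam ∘ ternFlip23 T := by
  have semiconj₁₂ := semiconj_pathVertices_sigmaT12 hdv T lam
  have semiconj₂₃ := semiconj_pathVertices_sigmaT23 hdv T lam
  have vertices_left := (semiconj₁₂.comp_right (semiconj₂₃.comp_right semiconj₁₂)).comp_eq
  have vertices_right := (semiconj₂₃.comp_right (semiconj₁₂.comp_right semiconj₂₃)).comp_eq
  have vertices_surjective := (leftInverse_pathVertices_pathEdges hdv lam).surjective
  rw [← vertices_surjective.injective_comp_right.eq_iff, ← vertices_left, ← vertices_right]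
  refine ⟨congrArg (pathVertices act lam ∘ ·), fun same_vertices => funext fun t => ?_⟩
  have recover_left := pathEdges_pathVertices_sigmaT12_sigmaT23 hdv T lam (sigmaT12 act dv T lam t)
  have recover_right :=
    pathEdges_pathVertices_sigmaT23_sigmaT12 hdv T lam (sigmaT23 act dv T lam t)
  exact recover_left.symm.trans <|
    (congrArg (pathEdges dv lam) (congrFun same_vertices t)).trans recover_right

end Paths

theorem sigmaT_DYB_iff_E1_E2_general {Λ X : Type*} {act : Λ → X → Λ} {dv : Λ → Λ → X}
    (hdv : ∀ l m, act l (dv l m) = m) (T : Λ → Λ → Λ → Λ) :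
    IsDYBMap act (sigmaTL act dv T) (sigmaTR act dv T) ↔ (TernE1 T ∧ TernE2 T) :=
  (and_iff_right (sigmaT_invariance hdv T)).trans <|
    (forall_congr' (sigmaT_braid_iff_ternFlip_braid hdv T)).trans (ternFlip_braid_iff T)

/-- Shibukawa's classification: for a dynamical set `(X, act)` of PH type (with
left division `dv`), the map `σ_T` associated to a ternary operation `T` on `Λ`
is a dynamical Yang–Baxter map if and only if `T` satisfies (E1) and (E2). -/
theorem sigmaT_DYB_iff_E1_E2 {Λ X : Type*} [Nonempty Λ] (act : Λ → X → Λ)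
    (hPH : Function.Bijective fun p : Λ × X => (p.1, act p.1 p.2))
    (dv : Λ → Λ → X)
    (hdv1 : ∀ l m, act l (dv l m) = m)
    (hdv2 : ∀ l x, dv l (act l x) = x)
    (T : Λ → Λ → Λ → Λ) :
    IsDYBMap act (sigmaTL act dv T) (sigmaTR act dv T) ↔ (TernE1 T ∧ TernE2 T) :=
  sigmaT_DYB_iff_E1_E2_general hdv1 T
end

section
/- Let X be a dynamical set over Λ of PH type. For every family σ = {σ(λ) : X × X → X × X}_{λ∈Λ} that is a dynamical Yang–Baxter map on X, there exists a unique ternary operation T = ⟨-,-,-⟩ on Λ such that σ(λ)(x, y) = (λ \ ⟨λ, λ ◁ x, (λ ◁ x) ◁ y⟩, ⟨λ, λ ◁ x, (λ ◁ x) ◁ y⟩ \ ((λ ◁ x) ◁ y)) for all λ ∈ Λ and x, y ∈ X. -/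
/-!
Evaluating `x ⇀_λ y = λ \ ⟨λ, λ ◁ x, (λ ◁ x) ◁ y⟩` at `x = a \ b`, `y = b \ c` and acting on `a`
forces `⟨a, b, c⟩ = a ◁ ((a \ b) ⇀_a (b \ c))`. Conversely, this operation recovers `⇀` by
cancelling divisions, and then `↼`, because invariance determines `x ↼_λ y` from `x ⇀_λ y`.
-/

section LeftComponent

variable {Λ X : Type*} {act : Λ → X → Λ} {dv : Λ → Λ → X}

/-- The ternary operation `⟨a, b, c⟩ = a ◁ ((a \ b) ⇀_a (b \ c))` on `Λ` forced by a family `l` of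
left components `⇀`. -/
def ternaryOfLeft (act : Λ → X → Λ) (dv : Λ → Λ → X) (l : Λ → X → X → X) : Λ → Λ → Λ → Λ :=
  fun a b c => act a (l a (dv a b) (dv b c))

theorem ternaryOfLeft_act_act (hdv : ∀ lam x, dv lam (act lam x) = x) (l : Λ → X → X → X)
    (lam : Λ) (x y : X) :
    ternaryOfLeft act dv l lam (act lam x) (act (act lam x) y) = act lam (l lam x y) := by
  simp only [ternaryOfLeft, hdv]

theorem ternaryOfLeft_sigmaTL (hact : ∀ lam m, act lam (dv lam m) = m) (T : Λ → Λ → Λ → Λ) :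
    ternaryOfLeft act dv (sigmaTL act dv T) = T := by
  funext a b c
  simp only [ternaryOfLeft, sigmaTL, hact]

theorem sigmaTL_ternaryOfLeft (hdv : ∀ lam x, dv lam (act lam x) = x) (l : Λ → X → X → X) :
    sigmaTL act dv (ternaryOfLeft act dv l) = l := by
  funext lam x y
  simp only [sigmaTL, ternaryOfLeft_act_act hdv, hdv]

theorem sigmaTR_ternaryOfLeft (hdv : ∀ lam x, dv lam (act lam x) = x) {l r : Λ → X → X → X}
    (hinv : ∀ lam x y, act (act lam (l lam x y)) (r lam x y) = act (act lam x) y) :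
    sigmaTR act dv (ternaryOfLeft act dv l) = r := by
  funext lam x y
  calc sigmaTR act dv (ternaryOfLeft act dv l) lam x y
      = dv (act lam (l lam x y)) (act (act lam x) y) := by
        rw [sigmaTR, ternaryOfLeft_act_act hdv]
    _ = dv (act lam (l lam x y)) (act (act lam (l lam x y)) (r lam x y)) := by rw [hinv]
    _ = r lam x y := hdv _ _

end LeftComponent

theorem DYB_on_PH_unique_ternary_general {Λ X : Type*} (act : Λ → X → Λ) (dv : Λ → Λ → X)
    (hdv1 : ∀ l m, act l (dv l m) = m)
    (hdv2 : ∀ l x, dv l (act l x) = x)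
    (l r : Λ → X → X → X)
    (hinv : ∀ lam x y, act (act lam (l lam x y)) (r lam x y) = act (act lam x) y) :
    ∃! T : Λ → Λ → Λ → Λ, ∀ lam x y,
      l lam x y = sigmaTL act dv T lam x y ∧
      r lam x y = sigmaTR act dv T lam x y := by
  refine ⟨ternaryOfLeft act dv l, fun lam x y => ⟨?_, ?_⟩, fun T hT => ?_⟩
  · rw [sigmaTL_ternaryOfLeft hdv2]
  · rw [sigmaTR_ternaryOfLeft hdv2 hinv]
  · have hl : l = sigmaTL act dv T := by
      funext lam x y
      exact (hT lam x y).1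
    rw [hl, ternaryOfLeft_sigmaTL hdv1]

/-- Every dynamical Yang–Baxter map on a dynamical set `(X, act)` of PH type
(with left division `dv`) arises from a unique ternary operation `T` on `Λ`
via the formulas defining `σ_T`. -/
theorem DYB_on_PH_unique_ternary {Λ X : Type*} [Nonempty Λ] (act : Λ → X → Λ)
    (hPH : Function.Bijective fun p : Λ × X => (p.1, act p.1 p.2))
    (dv : Λ → Λ → X)
    (hdv1 : ∀ l m, act l (dv l m) = m)
    (hdv2 : ∀ l x, dv l (act l x) = x)
    (l r : Λ → X → X → X) (h : IsDYBMap act l r) :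
    ∃! T : Λ → Λ → Λ → Λ, ∀ lam x y,
      l lam x y = sigmaTL act dv T lam x y ∧
      r lam x y = sigmaTR act dv T lam x y :=
  DYB_on_PH_unique_ternary_general act dv hdv1 hdv2 l r h.1
end

section
/- Let X be a dynamical set over Λ of PH type, T = ⟨-,-,-⟩ a ternary operation on Λ satisfying (E1) and (E2), and σ_T the associated dynamical Yang–Baxter map on X. Then σ_T is unitary, i.e. σ_T(λ) ∘ σ_T(λ) is the identity of X × X for all λ ∈ Λ, if and only if ⟨a, ⟨a, b, c⟩, c⟩ = b for all a, b, c ∈ Λ. -/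
/-- The dynamical Yang–Baxter map `σ_T` as a family of maps on `X × X`. -/
def sigmaTMap {Λ X : Type*} (act : Λ → X → Λ) (dv : Λ → Λ → X)
    (T : Λ → Λ → Λ → Λ) : Λ → X × X → X × X :=
  fun lam p => (sigmaTL act dv T lam p.1 p.2, sigmaTR act dv T lam p.1 p.2)

/-! Pairs `(x, y)` correspond bijectively to paths `a → a ◁ x → (a ◁ x) ◁ y` in `Λ` starting at `a`.
Under this correspondence `σ_T(a)` fixes both ends of the path `a → b → c` and replaces its middle
vertex `b` by `⟨a, b, c⟩`, so it is an involution exactly when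
`b ↦ ⟨a, b, c⟩` is one for every `c`. -/

theorem involutive_conj_iff {α β : Type*} (e : α ≃ β) (f : α → α) :
    Function.Involutive (e.conj f) ↔ Function.Involutive f := by
  simp only [Function.Involutive, e.conj_apply, e.symm_apply_apply, e.forall_congr_left,
    ← e.eq_symm_apply]

section

variable {Λ X : Type*}

/-- Path coordinates: the pair `(x, y)` corresponds to the last two vertices of the path
`a → a ◁ x → (a ◁ x) ◁ y`. A dynamical set of PH type is encoded by the bijections
`e a = (a ◁ ·)`, whose inverses are the left divisions `(a \ ·)`. -/
def pathEquiv (e : Λ → X ≃ Λ) (a : Λ) : X × X ≃ Λ × Λ :=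
  (e a).prodShear fun x => e (e a x)

/-- The map `σ_T(a)` in path coordinates: `(b, c)` stands for the path `a → b → c`. -/
def replaceMiddle (T : Λ → Λ → Λ → Λ) (a : Λ) (q : Λ × Λ) : Λ × Λ :=
  (T a q.1 q.2, q.2)

theorem sigmaTMap_eq_conj_replaceMiddle (e : Λ → X ≃ Λ) (T : Λ → Λ → Λ → Λ) (a : Λ) :
    sigmaTMap (fun l => e l) (fun l => (e l).symm) T a =
      (pathEquiv e a).symm.conj (replaceMiddle T a) := by
  funext p
  simp only [sigmaTMap, sigmaTL, sigmaTR, pathEquiv, replaceMiddle, Equiv.conj_apply,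
    Equiv.symm_symm, Equiv.prodShear_apply, Equiv.prodShear_symm_apply, Equiv.apply_symm_apply]

theorem involutive_replaceMiddle_iff (T : Λ → Λ → Λ → Λ) (a : Λ) :
    Function.Involutive (replaceMiddle T a) ↔ ∀ b c, T a (T a b c) c = b := by
  simp only [Function.Involutive, replaceMiddle, Prod.forall, Prod.mk.injEq, and_true]

theorem sigmaT_unitary_iff_general (act : Λ → X → Λ) (dv : Λ → Λ → X)
    (hdv1 : ∀ l m, act l (dv l m) = m) (hdv2 : ∀ l x, dv l (act l x) = x)
    (T : Λ → Λ → Λ → Λ) :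
    (∀ lam (p : X × X), sigmaTMap act dv T lam (sigmaTMap act dv T lam p) = p) ↔
      ∀ a b c : Λ, T a (T a b c) c = b := by
  let e (a : Λ) : X ≃ Λ := ⟨act a, dv a, hdv2 a, hdv1 a⟩
  refine forall_congr' fun a => ?_
  calc Function.Involutive (sigmaTMap (fun l => e l) (fun l => (e l).symm) T a)
    _ ↔ Function.Involutive (replaceMiddle T a) := by
      rw [sigmaTMap_eq_conj_replaceMiddle, involutive_conj_iff]
    _ ↔ ∀ b c, T a (T a b c) c = b := involutive_replaceMiddle_iff T a

end

/-- For a dynamical set `(X, act)` of PH type (with left division `dv`) and a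
ternary operation `T` satisfying (E1) and (E2), the dynamical Yang–Baxter map
`σ_T` is unitary if and only if `⟨a, ⟨a,b,c⟩, c⟩ = b` for all `a, b, c ∈ Λ`. -/
theorem sigmaT_unitary_iff {Λ X : Type*} [Nonempty Λ] (act : Λ → X → Λ)
    (hPH : Function.Bijective fun p : Λ × X => (p.1, act p.1 p.2))
    (dv : Λ → Λ → X)
    (hdv1 : ∀ l m, act l (dv l m) = m)
    (hdv2 : ∀ l x, dv l (act l x) = x)
    (T : Λ → Λ → Λ → Λ) (hE1 : TernE1 T) (hE2 : TernE2 T) :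
    (∀ lam (p : X × X),
        sigmaTMap act dv T lam (sigmaTMap act dv T lam p) = p)
      ↔ ∀ a b c : Λ, T a (T a b c) c = b := by
  exact sigmaT_unitary_iff_general act dv hdv1 hdv2 T
end

section
/- Let * be a binary operation on Λ such that (Λ, *) is a left quasigroup with left division \, and suppose that (a * c) \ ((a * b) * c) = (a' * c) \ ((a' * b) * c) for all a, a', b, c ∈ Λ. Then the ternary operation ⟨a, b, c⟩ := a * (b \ c) on Λ satisfies, for all a, b, c, d ∈ Λ, the equations (E1): ⟨a, ⟨a, b, c⟩, ⟨⟨a, b, c⟩, c, d⟩⟩ = ⟨a, b, ⟨b, c, d⟩⟩ and (E2): ⟨⟨a, b, c⟩, c, d⟩ = ⟨⟨a, b, ⟨b, c, d⟩⟩, ⟨b, c, d⟩, d⟩. -/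
/-- Transitivity of a ternary operation `T`: if `T a b` is read as a transport from `b` to `a`, then
transporting from `c` to `b` and from there to `a` is transporting from `c` to `a`. -/
def TernTrans {Λ : Type*} (T : Λ → Λ → Λ → Λ) : Prop :=
  ∀ a b c d, T a b (T b c d) = T a c d

section TernTrans

variable {Λ : Type*} {T : Λ → Λ → Λ → Λ}

theorem TernTrans.ternE1 (hT : TernTrans T) : TernE1 T := fun a b c d =>
  calc
    T a (T a b c) (T (T a b c) c d) = T a c d := hT a (T a b c) c d
    _ = T a b (T b c d) := (hT a b c d).symm

theorem TernTrans.ternE2_iff (hT : TernTrans T) :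
    TernE2 T ↔ ∀ a b c d, T (T a b c) c d = T (T a c d) (T b c d) d := by
  simp only [TernE2, hT _ _ _ _]

end TernTrans

section LeftDivision

variable {Λ : Type*} {star ldiv : Λ → Λ → Λ}

theorem ternTrans_star_ldiv (hd1 : ∀ a x, ldiv a (star a x) = x) :
    TernTrans (fun a b c => star a (ldiv b c)) := fun a b c d =>
  congrArg (star a) (hd1 b (ldiv c d))

theorem star_star_ldiv_star_star (hd2 : ∀ a b, star a (ldiv a b) = b)
    (hcond : ∀ a a' b c,
      ldiv (star a c) (star (star a b) c) = ldiv (star a' c) (star (star a' b) c))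
    (a b x u : Λ) :
    star (star a u) (ldiv (star b u) (star (star b x) u)) = star (star a x) u := by
  rw [hcond b a x u, hd2]

theorem star_star_ldiv_ldiv (hd2 : ∀ a b, star a (ldiv a b) = b)
    (hcond : ∀ a a' b c,
      ldiv (star a c) (star (star a b) c) = ldiv (star a' c) (star (star a' b) c))
    (a b c d : Λ) :
    star (star a (ldiv b c)) (ldiv c d) =
      star (star a (ldiv c d)) (ldiv (star b (ldiv c d)) d) := by
  have d_eq : star (star b (ldiv b c)) (ldiv c d) = d := by rw [hd2, hd2]
  simpa only [d_eq] using
    (star_star_ldiv_star_star hd2 hcond a b (ldiv b c) (ldiv c d)).symm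

end LeftDivision

/-- Let `(Λ, *)` be a left quasigroup with left division `\`, satisfying
`(a * c) \ ((a * b) * c) = (a' * c) \ ((a' * b) * c)` for all `a, a', b, c`.
Then the ternary operation `⟨a, b, c⟩ = a * (b \ c)` satisfies (E1) and (E2). -/
theorem quasigroup_ternary_satisfies_E1_E2 {Λ : Type*} [Nonempty Λ]
    (star ldiv : Λ → Λ → Λ)
    (hbij : ∀ a, Function.Bijective (star a))
    (hd1 : ∀ a x, ldiv a (star a x) = x)
    (hd2 : ∀ a b, star a (ldiv a b) = b)
    (hcond : ∀ a a' b c,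
      ldiv (star a c) (star (star a b) c)
        = ldiv (star a' c) (star (star a' b) c)) :
    TernE1 (fun a b c => star a (ldiv b c)) ∧
    TernE2 (fun a b c => star a (ldiv b c)) := by
  have hT : TernTrans (fun a b c => star a (ldiv b c)) := ternTrans_star_ldiv hd1
  exact ⟨hT.ternE1, hT.ternE2_iff.mpr (star_star_ldiv_ldiv hd2 hcond)⟩
end

section
/- Let X₀ be a non-empty set, {*_i}_{i∈X₀} a family of binary operations on Λ each making (Λ, *_i) a left quasigroup with left division \_i, and let X = X₀ × Λ be the dynamical set over Λ with λ ◁ (i, μ) = λ *_i μ. Let σ₀ : X₀ × X₀ → X₀ × X₀ be a map, written σ₀(i, j) = (i ▷ j, i ◁ j), and let T = ⟨-,-,-⟩ be a ternary operation on Λ. Define σ(λ)((i, x), (j, y)) = ((i ▷ j, λ \_{i ▷ j} m), (i ◁ j, m \_{i ◁ j} ((λ *_i x) *_j y))), where m = ⟨λ, λ *_i x, (λ *_i x) *_j y⟩. Then σ is a dynamical Yang–Baxter map on X if and only if σ₀ is a Yang–Baxter map on X₀ and T satisfies (E1) and (E2). -/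
/-- `(σ₀ × id)` on `X₀ × X₀ × X₀`, where `σ₀(i,j) = (tL i j, tR i j)`. -/
def ybS12 {X0 : Type*} (tL tR : X0 → X0 → X0) :
    X0 × X0 × X0 → X0 × X0 × X0 :=
  fun t => (tL t.1 t.2.1, tR t.1 t.2.1, t.2.2)

/-- `(id × σ₀)` on `X₀ × X₀ × X₀`. -/
def ybS23 {X0 : Type*} (tL tR : X0 → X0 → X0) :
    X0 × X0 × X0 → X0 × X0 × X0 :=
  fun t => (t.1, tL t.2.1 t.2.2, tR t.2.1 t.2.2)

/-- The structure map of the dynamical set `X = X₀ × Λ`: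
`λ ◁ (i, μ) = λ *_i μ`. -/
def actXfam {Λ X0 : Type*} (star : X0 → Λ → Λ → Λ) : Λ → X0 × Λ → Λ :=
  fun lam p => star p.1 lam p.2

/-- The left component of `σ`:
`(i, x) ⇀_λ (j, y) = (i ▷ j, λ \_{i ▷ j} ⟨λ, λ *_i x, (λ *_i x) *_j y⟩)`. -/
def newSigmaL {Λ X0 : Type*} (star ldiv : X0 → Λ → Λ → Λ)
    (tL : X0 → X0 → X0) (T : Λ → Λ → Λ → Λ) :
    Λ → X0 × Λ → X0 × Λ → X0 × Λ :=
  fun lam p q =>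
    (tL p.1 q.1,
      ldiv (tL p.1 q.1) lam
        (T lam (star p.1 lam p.2) (star q.1 (star p.1 lam p.2) q.2)))

/-- The right component of `σ`:
`(i, x) ↼_λ (j, y) = (i ◁ j, ⟨λ, λ *_i x, (λ *_i x) *_j y⟩ \_{i ◁ j} ((λ *_i x) *_j y))`. -/
def newSigmaR {Λ X0 : Type*} (star ldiv : X0 → Λ → Λ → Λ)
    (tR : X0 → X0 → X0) (T : Λ → Λ → Λ → Λ) :
    Λ → X0 × Λ → X0 × Λ → X0 × Λ :=
  fun lam p q =>
    (tR p.1 q.1,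
      ldiv (tR p.1 q.1)
        (T lam (star p.1 lam p.2) (star q.1 (star p.1 lam p.2) q.2))
        (star q.1 (star p.1 lam p.2) q.2))

/-!
Read an edge `(i, x)` at `a` as an arrow `a → a *_i x` of colour `i`, so that a triple of edges is a
coloured path `a → b → c → d`. In these coordinates `σ` acts on the colours by `σ₀` and on the
vertices by replacing the middle vertex `b` of `a → b → c` by `⟨a, b, c⟩`, independently. The
dynamical Yang–Baxter equation therefore splits into the Yang–Baxter equation for the colours and
the dynamical Yang–Baxter equation for the vertices, over `Λ` with `λ ◁ μ = μ`; the latter, written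
out, is (E1) and (E2).
-/

/-- The vertices `b, c, d` after `a` and the colours `i, j, k` of the path of three edges
`a → b → c → d` that starts at `a`. -/
def toColouredPath {Λ X0 : Type*} (star : X0 → Λ → Λ → Λ) (a : Λ) :
    (X0 × Λ) × (X0 × Λ) × (X0 × Λ) → (Λ × Λ × Λ) × (X0 × X0 × X0) :=
  fun t =>
    ((star t.1.1 a t.1.2,
      star t.2.1.1 (star t.1.1 a t.1.2) t.2.1.2,
      star t.2.2.1 (star t.2.1.1 (star t.1.1 a t.1.2) t.2.1.2) t.2.2.2),
      (t.1.1, t.2.1.1, t.2.2.1))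

/-- The edges, computed with the divisions `ldiv`, of the path `a → b → c → d` with given vertices
`b, c, d` and colours `i, j, k`. -/
def ofColouredPath {Λ X0 : Type*} (ldiv : X0 → Λ → Λ → Λ) (a : Λ) :
    (Λ × Λ × Λ) × (X0 × X0 × X0) → (X0 × Λ) × (X0 × Λ) × (X0 × Λ) :=
  fun p =>
    ((p.2.1, ldiv p.2.1 a p.1.1),
      (p.2.2.1, ldiv p.2.2.1 p.1.1 p.1.2.1),
      (p.2.2.2, ldiv p.2.2.2 p.1.2.1 p.1.2.2))

theorem prodMap_eq_prodMap_iff {α β γ δ : Type*} [Nonempty α] [Nonempty β]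
    {f f' : α → γ} {g g' : β → δ} :
    Prod.map f g = Prod.map f' g' ↔ f = f' ∧ g = g' := by
  simp only [funext_iff, Prod.forall, Prod.map_apply, Prod.mk.injEq, forall_and, forall_const]

theorem isDYBMap_ternary_iff {Λ : Type*} (T : Λ → Λ → Λ → Λ) :
    IsDYBMap (fun _ b => b) T (fun _ _ c => c) ↔ TernE1 T ∧ TernE2 T := by
  simp only [IsDYBMap, TernE1, TernE2, dybS12, dybS23, funext_iff, Function.comp_apply,
    Prod.forall, Prod.mk.injEq, and_true, implies_true, true_and, forall_and]

theorem braid_eq_iff_of_semiconj {α β : Type*} {s t : α → α} {s' t' : β → β}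
    {e : β → α} {p : α → β} (he : Function.Injective e)
    (hs : Function.Semiconj e s' s) (ht : Function.Semiconj e t' t)
    (hst : (s ∘ t) ∘ (e ∘ p) = s ∘ t) (hts : (t ∘ s) ∘ (e ∘ p) = t ∘ s) :
    s ∘ t ∘ s = t ∘ s ∘ t ↔ s' ∘ t' ∘ s' = t' ∘ s' ∘ t' := by
  have hsts : e ∘ (s' ∘ t' ∘ s') = (s ∘ t ∘ s) ∘ e :=
    (hs.comp_right (ht.comp_right hs)).comp_eq
  have htst : e ∘ (t' ∘ s' ∘ t') = (t ∘ s ∘ t) ∘ e :=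
    (ht.comp_right (hs.comp_right ht)).comp_eq
  constructor
  · intro h
    apply he.comp_left
    change e ∘ (s' ∘ t' ∘ s') = e ∘ (t' ∘ s' ∘ t')
    rw [hsts, htst, h]
  · intro h
    calc s ∘ t ∘ s = ((s ∘ t ∘ s) ∘ e) ∘ p := congrArg (s ∘ ·) hts.symm
      _ = ((t ∘ s ∘ t) ∘ e) ∘ p := by rw [← hsts, ← htst, h]
      _ = t ∘ s ∘ t := congrArg (t ∘ ·) hst

section NewSigma

variable {Λ X0 : Type*} {star ldiv : X0 → Λ → Λ → Λ} {tL tR : X0 → X0 → X0} {T : Λ → Λ → Λ → Λ}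

theorem leftInverse_toColouredPath (hdiv : ∀ i a b, star i a (ldiv i a b) = b) (a : Λ) :
    Function.LeftInverse (toColouredPath star a) (ofColouredPath ldiv a) := fun p => by
  simp only [toColouredPath, ofColouredPath, hdiv]

theorem newSigma_invariance (hdiv : ∀ i a b, star i a (ldiv i a b) = b) (a : Λ)
    (p q : X0 × Λ) :
    actXfam star (actXfam star a (newSigmaL star ldiv tL T a p q))
        (newSigmaR star ldiv tR T a p q) =
      actXfam star (actXfam star a p) q := by
  simp only [actXfam, newSigmaL, newSigmaR, hdiv]

theorem ofColouredPath_semiconj_dybS12 (hdiv : ∀ i a b, star i a (ldiv i a b) = b) (a : Λ) :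
    Function.Semiconj (ofColouredPath ldiv a)
      (Prod.map (dybS12 T (fun _ _ c => c) a) (ybS12 tL tR))
      (dybS12 (newSigmaL star ldiv tL T) (newSigmaR star ldiv tR T) a) := fun p => by
  simp only [ofColouredPath, Prod.map, dybS12, ybS12, newSigmaL, newSigmaR, hdiv]

theorem ofColouredPath_semiconj_dybS23 (hdiv : ∀ i a b, star i a (ldiv i a b) = b) (a : Λ) :
    Function.Semiconj (ofColouredPath ldiv a)
      (Prod.map (dybS23 (fun _ b => b) T (fun _ _ c => c) a) (ybS23 tL tR))
      (dybS23 (actXfam star) (newSigmaL star ldiv tL T) (newSigmaR star ldiv tR T) a) :=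
  fun p => by
    simp only [ofColouredPath, Prod.map, dybS23, ybS23, actXfam, newSigmaL, newSigmaR, hdiv]

-- `ofColouredPath ∘ toColouredPath` replaces an edge `(i, x)` at `a` by the edge
-- `(i, a \_i (a *_i x))` with the same end point. `σ` reads an edge only through its colour and
-- end point, and `dybS12` and `dybS23` together read all three edges.
theorem dybS12_comp_dybS23_comp_normalize (hdiv : ∀ i a b, star i a (ldiv i a b) = b) (a : Λ) :
    (dybS12 (newSigmaL star ldiv tL T) (newSigmaR star ldiv tR T) a ∘
        dybS23 (actXfam star) (newSigmaL star ldiv tL T) (newSigmaR star ldiv tR T) a) ∘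
          (ofColouredPath ldiv a ∘ toColouredPath star a) =
      dybS12 (newSigmaL star ldiv tL T) (newSigmaR star ldiv tR T) a ∘
        dybS23 (actXfam star) (newSigmaL star ldiv tL T) (newSigmaR star ldiv tR T) a := by
  funext t
  simp only [Function.comp_apply, ofColouredPath, toColouredPath, dybS12, dybS23, actXfam,
    newSigmaL, newSigmaR, hdiv]

theorem dybS23_comp_dybS12_comp_normalize (hdiv : ∀ i a b, star i a (ldiv i a b) = b) (a : Λ) :
    (dybS23 (actXfam star) (newSigmaL star ldiv tL T) (newSigmaR star ldiv tR T) a ∘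
        dybS12 (newSigmaL star ldiv tL T) (newSigmaR star ldiv tR T) a) ∘
          (ofColouredPath ldiv a ∘ toColouredPath star a) =
      dybS23 (actXfam star) (newSigmaL star ldiv tL T) (newSigmaR star ldiv tR T) a ∘
        dybS12 (newSigmaL star ldiv tL T) (newSigmaR star ldiv tR T) a := by
  funext t
  simp only [Function.comp_apply, ofColouredPath, toColouredPath, dybS12, dybS23, actXfam,
    newSigmaL, newSigmaR, hdiv]

theorem isDYBMap_newSigma_iff [Nonempty Λ] [Nonempty X0]
    (hdiv : ∀ i a b, star i a (ldiv i a b) = b) :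
    IsDYBMap (actXfam star) (newSigmaL star ldiv tL T) (newSigmaR star ldiv tR T) ↔
      IsDYBMap (fun _ b => b) T (fun _ _ c => c) ∧
        ybS12 tL tR ∘ ybS23 tL tR ∘ ybS12 tL tR =
          ybS23 tL tR ∘ ybS12 tL tR ∘ ybS23 tL tR := by
  rw [IsDYBMap, IsDYBMap, and_iff_right (newSigma_invariance hdiv),
    and_iff_right (fun _ _ _ => rfl), ← forall_and_right]
  refine forall_congr' fun a => ?_
  rw [braid_eq_iff_of_semiconj (leftInverse_toColouredPath hdiv a).injective
    (ofColouredPath_semiconj_dybS12 hdiv a)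
    (ofColouredPath_semiconj_dybS23 hdiv a)
    (dybS12_comp_dybS23_comp_normalize hdiv a)
    (dybS23_comp_dybS12_comp_normalize hdiv a)]
  simp only [Prod.map_comp_map, prodMap_eq_prodMap_iff]

end NewSigma

theorem newSigma_DYB_iff_general {Λ X0 : Type*} [Nonempty Λ] [Nonempty X0]
    (star ldiv : X0 → Λ → Λ → Λ)
    (hdiv : ∀ i a b, star i a (ldiv i a b) = b)
    (tL tR : X0 → X0 → X0) (T : Λ → Λ → Λ → Λ) :
    IsDYBMap (actXfam star) (newSigmaL star ldiv tL T) (newSigmaR star ldiv tR T)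
      ↔ ((ybS12 tL tR ∘ ybS23 tL tR ∘ ybS12 tL tR
            = ybS23 tL tR ∘ ybS12 tL tR ∘ ybS23 tL tR) ∧
          TernE1 T ∧ TernE2 T) := by
  rw [isDYBMap_newSigma_iff hdiv, isDYBMap_ternary_iff, and_comm]

/-- The map `σ` on the dynamical set `X = X₀ × Λ` built from `σ₀` and a ternary
operation `T` is a dynamical Yang–Baxter map if and only if `σ₀` is a
Yang–Baxter map on `X₀` and `T` satisfies (E1) and (E2). -/
theorem newSigma_DYB_iff {Λ X0 : Type*} [Nonempty Λ] [Nonempty X0]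
    (star ldiv : X0 → Λ → Λ → Λ)
    (hbij : ∀ i a, Function.Bijective (star i a))
    (hd1 : ∀ i a x, ldiv i a (star i a x) = x)
    (hd2 : ∀ i a b, star i a (ldiv i a b) = b)
    (tL tR : X0 → X0 → X0) (T : Λ → Λ → Λ → Λ) :
    IsDYBMap (actXfam star) (newSigmaL star ldiv tL T) (newSigmaR star ldiv tR T)
      ↔ ((ybS12 tL tR ∘ ybS23 tL tR ∘ ybS12 tL tR
            = ybS23 tL tR ∘ ybS12 tL tR ∘ ybS23 tL tR) ∧
          TernE1 T ∧ TernE2 T) := by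
  exact newSigma_DYB_iff_general star ldiv hd2 tL tR T
end
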